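/- If m is even, the solution ẑ_m(t,0) of R_m(z) = e^t satisfying ẑ_m(t,0) = D_m/t + O(1) (D_m > 0) obeys R_m′(ẑ_m(t,0)) = O(t²) as |t| → 0. If m is odd, the solution ẑ_m(t,π) of R_m(z) = −e^t satisfying ẑ_m(t,π) = E_m/t + O(1) (E_m > 0) obeys R_m′(ẑ_m(t,π)) = O(t²) as |t| → 0. -/

import Mathlib

/-! STATEMENT 14: along the unbounded solution branch `ẑ_m(t,0) = D_m/t + O(1)` of
`R_m(z) = e^t` (m even), respectively `ẑ_m(t,π) = E_m/t + O(1)` of `R_m(z) = −e^t`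
(m odd), one has `R_m′(ẑ_m(t,·)) = O(t²)` as `|t| → 0`. -/

open Finset Complex Topology Asymptotics

/-- `p_j = (2m−j)!/(j!(m−j)!)`, the coefficients of the Padé numerator `P_m`. -/
noncomputable def pcoef (m j : ℕ) : ℂ :=
  ((2 * m - j).factorial : ℂ) / ((j.factorial : ℂ) * ((m - j).factorial : ℂ))

/-- The numerator `P_m` of the `(m,m)`-Padé approximant of the exponential. -/
noncomputable def Pgauss (m : ℕ) (z : ℂ) : ℂ :=
  ∑ j ∈ Finset.range (m + 1), pcoef m j * z ^ j

/-- The stability function `R_m = P_m(z)/P_m(−z)` of the m-stage Gauss method. -/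
noncomputable def Rgauss (m : ℕ) (z : ℂ) : ℂ := Pgauss m z / Pgauss m (-z)

/-! `R_m` is a rational function `p / q` with `deg p ≤ deg q`, so the top-degree terms of the
numerator `p' q - p q'` of its derivative cancel and leave a degree of at most `2 deg q - 2`.
Hence `R_m'(z) = O(z⁻²)` at infinity, and `ẑ_m(t)` grows at least like `1 / t`. -/

open Polynomial Filter Bornology

section Wronskian

variable {K : Type*} [Field K] {p q : K[X]}

theorem degree_div_le_zero (h : p.degree ≤ q.degree) (hq : q ≠ 0) : (p / q).degree ≤ 0 := by
  rcases h.lt_or_eq with hlt | heq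
  · simp [(Polynomial.div_eq_zero_iff hq).mpr hlt]
  · have hadd : q.degree + (p / q).degree ≤ q.degree + 0 := by
      rw [degree_add_div hq heq.ge, heq, add_zero]
    exact (WithBot.add_le_add_iff_left (degree_ne_bot.mpr hq)).mp hadd

theorem wronskian_mod_right (h : p.degree ≤ q.degree) (hq : q ≠ 0) :
    wronskian q (p % q) = wronskian q p := by
  have hconst := eq_C_of_degree_le_zero (degree_div_le_zero h hq)
  have hself : wronskian q (q * (p / q)) = 0 := by
    rw [hconst, wronskian, derivative_mul, derivative_C]
    ring
  conv_rhs => rw [← EuclideanDomain.div_add_mod p q, wronskian_add_right, hself, zero_add]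

-- Passing to `p % q`, of degree below that of `q`, gains one degree over
-- `Polynomial.degree_wronskian_lt_add`.
theorem degree_wronskian_mul_X_sq_le (h : p.degree ≤ q.degree) :
    (wronskian q p * X ^ 2).degree ≤ (q ^ 2).degree := by
  rcases eq_or_ne q 0 with rfl | hq
  · simp
  rcases eq_or_ne (wronskian q p) 0 with hW | hW
  · simp [hW]
  rw [← wronskian_mod_right h hq] at hW ⊢
  have hr : p % q ≠ 0 := by
    intro hr
    simp [hr] at hW
  have hlt : (p % q).natDegree < q.natDegree :=
    natDegree_lt_natDegree hr (EuclideanDomain.mod_lt p hq)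
  have hWlt := natDegree_wronskian_lt_add hW
  rw [degree_eq_natDegree (pow_ne_zero 2 hq), natDegree_pow]
  refine degree_le_of_natDegree_le ?_
  rw [natDegree_mul_X_pow 2 hW]
  omega

end Wronskian

section Deriv

variable {𝕜 : Type*} [NontriviallyNormedField 𝕜] {p q : 𝕜[X]}

theorem deriv_eval_div_eval {z : 𝕜} (hz : q.eval z ≠ 0) :
    deriv (fun w => p.eval w / q.eval w) z = (wronskian q p).eval z / q.eval z ^ 2 := by
  rw [((p.hasDerivAt z).fun_div (q.hasDerivAt z) hz).deriv, wronskian]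
  simp only [eval_sub, eval_mul]
  ring

theorem deriv_eval_div_eval_isBigO_cobounded (h : p.degree ≤ q.degree) (hq : q ≠ 0) :
    deriv (fun z => p.eval z / q.eval z) =O[cobounded 𝕜] fun z => (z ^ 2)⁻¹ := by
  have hq_eval : ∀ᶠ z in cobounded 𝕜, q.eval z ≠ 0 :=
    le_cofinite 𝕜 (eventually_cofinite_not_isRoot hq)
  have hW : (fun z => (wronskian q p * X ^ 2).eval z) =O[cobounded 𝕜] fun z => (q ^ 2).eval z :=
    isBigO_cobounded_of_degree_le (degree_wronskian_mul_X_sq_le h)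
  refine (hW.mul (isBigO_refl (fun z => (q.eval z ^ 2 * z ^ 2)⁻¹) _)).congr' ?_ ?_
  · filter_upwards [hq_eval, eventually_ne_cobounded 0] with z hqz hz
    rw [deriv_eval_div_eval hqz, eval_mul, eval_pow, eval_X]
    field_simp
  · filter_upwards [hq_eval] with z hqz
    rw [eval_pow]
    field_simp

end Deriv

theorem pcoef_ne_zero (m j : ℕ) : pcoef m j ≠ 0 := by
  simp [pcoef, Nat.factorial_ne_zero]

/-- The Padé numerator `P_m` as an element of `ℂ[X]`, giving access to its degree. -/
noncomputable def pgaussPoly (m : ℕ) : ℂ[X] :=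
  ∑ j ∈ Finset.range (m + 1), monomial j (pcoef m j)

theorem eval_pgaussPoly (m : ℕ) (z : ℂ) : (pgaussPoly m).eval z = Pgauss m z := by
  simp [pgaussPoly, Pgauss, eval_finsetSum]

theorem pgaussPoly_ne_zero (m : ℕ) : pgaussPoly m ≠ 0 := by
  intro h
  have hcoeff : (pgaussPoly m).coeff 0 = pcoef m 0 := by
    simp [pgaussPoly, coeff_monomial]
  exact pcoef_ne_zero m 0 (by rw [← hcoeff, h, coeff_zero])

theorem Rgauss_eq_eval_div_eval (m : ℕ) :
    Rgauss m = fun z => (pgaussPoly m).eval z / ((pgaussPoly m).comp (-X)).eval z := by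
  ext z
  simp [Rgauss, eval_pgaussPoly]

theorem deriv_Rgauss_isBigO_cobounded (m : ℕ) :
    deriv (Rgauss m) =O[cobounded ℂ] fun z => (z ^ 2)⁻¹ := by
  rw [Rgauss_eq_eval_div_eval]
  exact deriv_eval_div_eval_isBigO_cobounded degree_comp_neg_X.ge
    (comp_neg_X_eq_zero_iff.not.mpr (pgaussPoly_ne_zero m))

theorem inv_isBigO_of_sub_div_isBigO_one {𝕜 : Type*} [NormedField 𝕜] {D : 𝕜} (hD : D ≠ 0)
    {f : 𝕜 → 𝕜} (hf : (fun t => f t - D / t) =O[𝓝[≠] 0] fun _ => (1 : 𝕜)) :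
    (fun t => t⁻¹) =O[𝓝[≠] 0] f := by
  have hone : (fun _ => (1 : 𝕜)) =o[𝓝[≠] 0] fun t : 𝕜 => t⁻¹ :=
    (isLittleO_const_id_cobounded 1).comp_tendsto tendsto_inv₀_nhdsNE_zero
  have hequiv : f ~[𝓝[≠] 0] fun t => D * t⁻¹ := by
    simp only [div_eq_mul_inv] at hf
    exact hf.trans_isLittleO (hone.const_mul_right hD)
  exact (isBigO_self_const_mul hD _ _).trans hequiv.isBigO_symm

theorem deriv_Rgauss_along_unbounded_solution_general (m : ℕ) {zh : ℂ → ℂ}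
    (hzh : (fun t : ℂ => t⁻¹) =O[𝓝[≠] 0] zh) :
    (fun t : ℂ => deriv (Rgauss m) (zh t)) =O[𝓝[≠] 0] fun t : ℂ => t ^ 2 := by
  have hzh_inv : (fun t => (zh t)⁻¹) =O[𝓝[≠] 0] fun t => t := by
    have hne : ∀ᶠ t : ℂ in 𝓝[≠] 0, t⁻¹ = 0 → zh t = 0 := by
      filter_upwards [self_mem_nhdsWithin] with t ht h0
      exact absurd (inv_eq_zero.mp h0) ht
    simpa only [inv_inv] using hzh.inv_rev hne
  have hzh_tendsto : Tendsto zh (𝓝[≠] 0) (cobounded ℂ) :=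
    tendsto_norm_atTop_iff_cobounded.mp <| hzh.trans_tendsto_norm_atTop <|
      tendsto_norm_atTop_iff_cobounded.mpr tendsto_inv₀_nhdsNE_zero
  calc (fun t => deriv (Rgauss m) (zh t))
      =O[𝓝[≠] 0] fun t => (zh t ^ 2)⁻¹ :=
        (deriv_Rgauss_isBigO_cobounded m).comp_tendsto hzh_tendsto
    _ =O[𝓝[≠] 0] fun t => t ^ 2 := by simpa only [inv_pow] using hzh_inv.pow 2

theorem deriv_Rgauss_along_unbounded_solution
    (m : ℕ) (hm : 1 ≤ m) (D : ℝ) (hD : 0 < D) (zh : ℂ → ℂ)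
    (hcase :
      (Even m ∧ (∀ᶠ t : ℂ in 𝓝[≠] (0 : ℂ), Rgauss m (zh t) = Complex.exp t)) ∨
      (Odd m ∧ (∀ᶠ t : ℂ in 𝓝[≠] (0 : ℂ), Rgauss m (zh t) = -Complex.exp t)))
    (hexp : (fun t : ℂ => zh t - (D : ℂ) / t) =O[𝓝[≠] (0 : ℂ)] fun _ : ℂ => (1 : ℂ)) :
    (fun t : ℂ => deriv (Rgauss m) (zh t)) =O[𝓝[≠] (0 : ℂ)] fun t : ℂ => t ^ 2 := by
  exact deriv_Rgauss_along_unbounded_solution_general m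
    (inv_isBigO_of_sub_div_isBigO_one (ofReal_ne_zero.mpr hD.ne') hexp)
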